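/- arXiv:2208.06535 — 6 statements merged into one kernel-verified Lean document; each statement's English description precedes it below -/
import Mathlib

section
/- Let (Ω, 𝓕, P) be a probability space and let η, X : Ω → ℝ be nonnegative random variables. Then ∫₀¹ q_η(1−p) · q_X(p) dp ≤ E[η·X], where both sides are interpreted as Lebesgue integrals with values in [0, ∞]. (This is the 'minimum' side of the Hardy–Littlewood inequality, Lemma 2.2 of the paper.) -/
open MeasureTheory Set

/-- The quantile function of a Borel measure `μ` on `ℝ`:
`q_μ(p) = inf {x | p ≤ μ((-∞, x])}`. -/
noncomputable def quantile (μ : Measure ℝ) (p : ℝ) : ℝ :=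
  sInf {x : ℝ | p ≤ (μ (Iic x)).toReal}

lemma aux_cdf (μ : Measure ℝ) [IsProbabilityMeasure μ] (x : ℝ) :
    (μ (Iic x)).toReal = ProbabilityTheory.cdf μ x := by
  rw [ProbabilityTheory.cdf_eq_real]; rfl

lemma aux_nonneg (μ : Measure ℝ) [IsProbabilityMeasure μ] (h0 : μ (Iio 0) = 0)
    (p x : ℝ) (hp : 0 < p) (hx : p ≤ ProbabilityTheory.cdf μ x) : 0 ≤ x := by
  by_contra hneg
  push Not at hneg
  have : μ (Iic x) = 0 := measure_mono_null (fun y hy => lt_of_le_of_lt hy hneg) h0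
  rw [← aux_cdf, this] at hx
  simp at hx
  linarith

lemma aux_quantile_nonneg (μ : Measure ℝ) [IsProbabilityMeasure μ] (h0 : μ (Iio 0) = 0)
    (p : ℝ) (hp : 0 < p) : 0 ≤ quantile μ p := by
  unfold quantile
  simp only [aux_cdf]
  exact Real.sInf_nonneg (fun x hx => aux_nonneg μ h0 p x hp hx)

lemma aux_quantile_lt (μ : Measure ℝ) [IsProbabilityMeasure μ] (h0 : μ (Iio 0) = 0)
    (p : ℝ) (hp : 0 < p) (hp1 : p < 1) (s : ℝ) :
    s < quantile μ p ↔ ProbabilityTheory.cdf μ s < p := by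
  unfold quantile
  simp only [aux_cdf]
  constructor
  · intro h
    by_contra hc
    push Not at hc
    exact absurd (csInf_le ⟨0, fun x hx => aux_nonneg μ h0 p x hp hx⟩ hc) (not_le.2 h)
  · intro h
    have hr := (ProbabilityTheory.cdf μ).right_continuous s
    have h1 : ∀ᶠ y in nhdsWithin s (Ioi s), ProbabilityTheory.cdf μ y < p :=
      (hr.mono Ioi_subset_Ici_self).eventually (gt_mem_nhds h)
    obtain ⟨y, hy, hys⟩ := (h1.and self_mem_nhdsWithin).exists
    obtain ⟨z, hz⟩ := ((ProbabilityTheory.tendsto_cdf_atTop μ).eventually (lt_mem_nhds hp1)).exists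
    refine lt_of_lt_of_le hys (le_csInf ⟨z, hz.le⟩ fun x hx => ?_)
    by_contra hc
    push Not at hc
    have := (ProbabilityTheory.cdf μ).mono hc.le
    have hx' : p ≤ ProbabilityTheory.cdf μ x := hx
    linarith

lemma aux_vol (a : ℝ) : (volume.restrict (Ioi (0:ℝ))) (Iio a) = ENNReal.ofReal a := by
  rw [Measure.restrict_apply measurableSet_Iio, Iio_inter_Ioi]
  simp

lemma aux_fubini {α : Type*} [MeasurableSpace α] (μ : Measure α) [SFinite μ]
    (ν : Measure ℝ) [SFinite ν] (U V : Set (α × ℝ)) (hU : MeasurableSet U) (hV : MeasurableSet V) :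
    ∫⁻ p, ν {s | (p, s) ∈ U} * ν {t | (p, t) ∈ V} ∂μ
      = ∫⁻ st, μ {p | (p, st.1) ∈ U ∧ (p, st.2) ∈ V} ∂(ν.prod ν) := by
  have hW : MeasurableSet {w : α × (ℝ × ℝ) | (w.1, w.2.1) ∈ U ∧ (w.1, w.2.2) ∈ V} := by
    apply MeasurableSet.inter
    · exact (by fun_prop : Measurable fun w : α × (ℝ × ℝ) => (w.1, w.2.1)) hU
    · exact (by fun_prop : Measurable fun w : α × (ℝ × ℝ) => (w.1, w.2.2)) hV
  have h1 := Measure.prod_apply (μ := μ) (ν := ν.prod ν) hW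
  have h2 := Measure.prod_apply_symm (μ := μ) (ν := ν.prod ν) hW
  rw [h1] at h2
  refine Eq.trans ?_ h2
  refine lintegral_congr fun p => ?_
  rw [← Measure.prod_prod]
  rfl

theorem hardy_littlewood_lower {Ω : Type*} [MeasurableSpace Ω]
    (P : Measure Ω) [IsProbabilityMeasure P]
    (η X : Ω → ℝ) (hη : Measurable η) (hX : Measurable X)
    (hη0 : ∀ ω, 0 ≤ η ω) (hX0 : ∀ ω, 0 ≤ X ω) :
    ∫⁻ p in Ioo (0:ℝ) 1,
        ENNReal.ofReal (quantile (P.map η) (1 - p) * quantile (P.map X) p)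
      ≤ ∫⁻ ω, ENNReal.ofReal (η ω * X ω) ∂P := by
  have : IsProbabilityMeasure (P.map η) := Measure.isProbabilityMeasure_map hη.aemeasurable
  have : IsProbabilityMeasure (P.map X) := Measure.isProbabilityMeasure_map hX.aemeasurable
  have e0 : (P.map η) (Iio 0) = 0 := by
    rw [Measure.map_apply hη measurableSet_Iio]
    convert measure_empty (μ := P)
    ext ω; simpa using hη0 ω
  have x0 : (P.map X) (Iio 0) = 0 := by
    rw [Measure.map_apply hX measurableSet_Iio]
    convert measure_empty (μ := P)
    ext ω; simpa using hX0 ω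
  set F := ProbabilityTheory.cdf (P.map η) with hF
  set G := ProbabilityTheory.cdf (P.map X) with hG
  have mF : Measurable F := F.mono.measurable
  have mG : Measurable G := G.mono.measurable
  set ν := volume.restrict (Ioi (0:ℝ)) with hν
  have L : ∫⁻ p in Ioo (0:ℝ) 1,
        ENNReal.ofReal (quantile (P.map η) (1 - p) * quantile (P.map X) p)
      = ∫⁻ p in Ioo (0:ℝ) 1, ν {s | (p, s) ∈ {z : ℝ × ℝ | F z.2 < 1 - z.1}} *
          ν {t | (p, t) ∈ {z : ℝ × ℝ | G z.2 < z.1}} := by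
    refine setLIntegral_congr_fun measurableSet_Ioo fun p hp => ?_
    have hp1 : 0 < 1 - p := by linarith [hp.2]
    have hp2 : 1 - p < 1 := by linarith [hp.1]
    simp only [mem_ofPred_eq]
    rw [ENNReal.ofReal_mul (aux_quantile_nonneg _ e0 _ hp1), ← aux_vol, ← aux_vol]
    congr 2
    · ext s; exact aux_quantile_lt _ e0 _ hp1 hp2 s
    · ext s; exact aux_quantile_lt _ x0 _ hp.1 hp.2 s
  have R : ∫⁻ ω, ENNReal.ofReal (η ω * X ω) ∂P
      = ∫⁻ ω, ν {s | (ω, s) ∈ {z : Ω × ℝ | z.2 < η z.1}} *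
          ν {t | (ω, t) ∈ {z : Ω × ℝ | z.2 < X z.1}} ∂P := by
    refine lintegral_congr fun ω => ?_
    rw [ENNReal.ofReal_mul (hη0 ω), ← aux_vol, ← aux_vol]
    rfl
  rw [L, R, aux_fubini, aux_fubini]
  rotate_left
  · exact measurableSet_lt (by fun_prop) (by fun_prop)
  · exact measurableSet_lt (by fun_prop) (by fun_prop)
  · exact measurableSet_lt (by fun_prop) (by fun_prop)
  · exact measurableSet_lt (by fun_prop) (by fun_prop)
  refine lintegral_mono fun st => ?_
  obtain ⟨s, t⟩ := st
  simp only [mem_ofPred_eq]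
  have hA : F s = P.real (η ⁻¹' Iic s) := by
    rw [hF, ← aux_cdf, Measure.map_apply hη measurableSet_Iic]; rfl
  have hB : G t = P.real (X ⁻¹' Iic t) := by
    rw [hG, ← aux_cdf, Measure.map_apply hX measurableSet_Iic]; rfl
  calc (volume.restrict (Ioo (0:ℝ) 1)) {p | F s < 1 - p ∧ G t < p}
      ≤ volume {p | F s < 1 - p ∧ G t < p} := Measure.restrict_apply_le _ _
    _ ≤ volume (Ioo (G t) (1 - F s)) :=
        measure_mono fun p hp => ⟨hp.2, by linarith [hp.1]⟩
    _ = ENNReal.ofReal (1 - F s - G t) := Real.volume_Ioo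
    _ ≤ ENNReal.ofReal (P.real {ω | s < η ω ∧ t < X ω}) := by
        apply ENNReal.ofReal_le_ofReal
        have h1 : (univ : Set Ω) ⊆ (η ⁻¹' Iic s ∪ X ⁻¹' Iic t) ∪ {ω | s < η ω ∧ t < X ω} := by
          intro ω _
          simp only [mem_union, mem_preimage, mem_Iic, mem_ofPred_eq]
          grind
        have h2 := measureReal_mono (μ := P) h1
        have h3 := measureReal_union_le (μ := P) (η ⁻¹' Iic s ∪ X ⁻¹' Iic t)
          {ω | s < η ω ∧ t < X ω}
        have h4 := measureReal_union_le (μ := P) (η ⁻¹' Iic s) (X ⁻¹' Iic t)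
        rw [probReal_univ] at h2
        linarith
    _ = P {ω | s < η ω ∧ t < X ω} := ofReal_measureReal
end

section
/- Let η be a nonnegative atomless random variable on a probability space (Ω, 𝓕, P), and let μ be a Borel probability measure on [0, ∞). Then the random variable X* := q_μ(1 − F_η(η)) has law μ, and E[η·X*] = ∫₀¹ q_η(1−p) · q_μ(p) dp, with equality in [0, ∞]. -/
open MeasureTheory Set

theorem quantile_le_iff_aux (μ : Measure ℝ) [IsProbabilityMeasure μ] {p : ℝ} (hp : p ∈ Ioo (0:ℝ) 1)
    (x : ℝ) : quantile μ p ≤ x ↔ p ≤ (μ (Iic x)).toReal := by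
  have hc : ∀ x, (μ (Iic x)).toReal = ProbabilityTheory.cdf μ x := fun x => by
    rw [ProbabilityTheory.cdf_eq_real]; rfl
  have hbdd : BddBelow {x : ℝ | p ≤ (μ (Iic x)).toReal} := by
    obtain ⟨a, ha⟩ := ((ProbabilityTheory.tendsto_cdf_atBot μ).eventually_lt_const hp.1).exists
    refine ⟨a, fun y hy => ?_⟩
    by_contra! h
    have h1 := ProbabilityTheory.monotone_cdf μ h.le
    rw [mem_ofPred_eq, hc] at hy
    linarith
  have hne : {x : ℝ | p ≤ (μ (Iic x)).toReal}.Nonempty := by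
    obtain ⟨a, ha⟩ := ((ProbabilityTheory.tendsto_cdf_atTop μ).eventually_const_lt hp.2).exists
    exact ⟨a, by rw [mem_ofPred_eq, hc]; exact ha.le⟩
  constructor
  · intro h
    rw [hc]
    have hr : Filter.Tendsto (ProbabilityTheory.cdf μ) (nhdsWithin x (Ioi x))
        (nhds (ProbabilityTheory.cdf μ x)) :=
      ((ProbabilityTheory.cdf μ).right_continuous x).mono_left
        (nhdsWithin_mono _ Ioi_subset_Ici_self)
    refine ge_of_tendsto hr ?_
    filter_upwards [self_mem_nhdsWithin] with y hy
    obtain ⟨z, hz, hzy⟩ := exists_lt_of_csInf_lt hne (lt_of_le_of_lt h hy)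
    rw [mem_ofPred_eq, hc] at hz
    exact hz.trans (ProbabilityTheory.monotone_cdf μ hzy.le)
  · intro h
    exact csInf_le hbdd h

theorem aemeasurable_quantile_aux (μ : Measure ℝ) [IsProbabilityMeasure μ] :
    AEMeasurable (quantile μ) (volume.restrict (Ioo (0:ℝ) 1)) := by
  refine aemeasurable_restrict_of_monotoneOn measurableSet_Ioo ?_
  intro p hp q hq hpq
  rw [quantile_le_iff_aux μ hp]
  exact hpq.trans ((quantile_le_iff_aux μ hq _).1 le_rfl)

instance isProb_aux : IsProbabilityMeasure (volume.restrict (Ioo (0:ℝ) 1)) :=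
  ⟨by simp⟩

theorem map_quantile_aux (μ : Measure ℝ) [IsProbabilityMeasure μ] :
    (volume.restrict (Ioo (0:ℝ) 1)).map (quantile μ) = μ := by
  have hm := aemeasurable_quantile_aux μ
  have := Measure.isProbabilityMeasure_map hm
  refine Measure.ext_of_Iic _ _ fun x => ?_
  rw [Measure.map_apply_of_aemeasurable hm measurableSet_Iic]
  have h1 : (volume.restrict (Ioo (0:ℝ) 1)) (quantile μ ⁻¹' Iic x)
      = (volume.restrict (Ioo (0:ℝ) 1)) (Iic (μ (Iic x)).toReal) := by
    refine measure_congr ?_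
    filter_upwards [ae_restrict_mem measurableSet_Ioo] with p hp
    exact propext (quantile_le_iff_aux μ hp x)
  rw [h1, Measure.restrict_congr_set Ioo_ae_eq_Ioc, Measure.restrict_apply measurableSet_Iic]
  have h2 : (μ (Iic x)).toReal ≤ 1 := by
    have := ENNReal.toReal_mono ENNReal.one_ne_top (prob_le_one (μ := μ) (s := Iic x))
    simpa using this
  have h3 : Iic (μ (Iic x)).toReal ∩ Ioc (0:ℝ) 1 = Ioc 0 (μ (Iic x)).toReal := by
    ext y
    simp only [mem_inter_iff, mem_Iic, mem_Ioc]
    constructor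
    · rintro ⟨a, b, c⟩; exact ⟨b, a⟩
    · rintro ⟨a, b⟩; exact ⟨b, a, b.trans h2⟩
  rw [h3, Real.volume_Ioc, sub_zero, ENNReal.ofReal_toReal (measure_ne_top _ _)]

theorem cdf_quantile_aux (ν : Measure ℝ) [IsProbabilityMeasure ν]
    (hc : Continuous fun x => (ν (Iic x)).toReal) {p : ℝ} (hp : p ∈ Ioo (0:ℝ) 1) :
    (ν (Iic (quantile ν p))).toReal = p := by
  refine le_antisymm ?_ ((quantile_le_iff_aux ν hp _).1 le_rfl)
  have ht := (hc.tendsto (quantile ν p)).mono_left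
    (nhdsWithin_le_nhds (s := Iio (quantile ν p)))
  refine le_of_tendsto ht ?_
  filter_upwards [self_mem_nhdsWithin] with y hy
  by_contra! h
  exact absurd ((quantile_le_iff_aux ν hp y).2 h.le) (not_le.2 hy)

theorem mp_one_sub_aux : MeasurePreserving (fun p : ℝ => 1 - p)
    (volume.restrict (Ioo (0:ℝ) 1)) (volume.restrict (Ioo (0:ℝ) 1)) := by
  have h := (Measure.measurePreserving_sub_left (volume : Measure ℝ) 1).restrict_preimage
    (measurableSet_Ioo (a := (0:ℝ)) (b := 1))
  have e : (fun p : ℝ => 1 - p) ⁻¹' Ioo (0:ℝ) 1 = Ioo 0 1 := by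
    simp
  rwa [e] at h

theorem map_cdf_aux (ν : Measure ℝ) [IsProbabilityMeasure ν]
    (hc : Continuous fun x => (ν (Iic x)).toReal) :
    MeasurePreserving (fun x => (ν (Iic x)).toReal) ν (volume.restrict (Ioo (0:ℝ) 1)) := by
  refine ⟨hc.measurable, ?_⟩
  have h := AEMeasurable.map_map_of_aemeasurable
    (μ := volume.restrict (Ioo (0:ℝ) 1)) (f := quantile ν)
    (g := fun x => (ν (Iic x)).toReal) hc.measurable.aemeasurable (aemeasurable_quantile_aux ν)
  rw [map_quantile_aux] at h
  rw [h]
  conv_rhs => rw [← Measure.map_id (μ := volume.restrict (Ioo (0:ℝ) 1))]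
  refine Measure.map_congr ?_
  filter_upwards [ae_restrict_mem measurableSet_Ioo] with p hp
  exact cdf_quantile_aux ν hc hp

/-- If `η ≥ 0` is atomless and `μ` is a Borel probability measure on `[0, ∞)`, then
`X* := q_μ(1 - F_η(η))` has law `μ` and `E[η X*] = ∫₀¹ q_η(1-p) q_μ(p) dp` in `[0, ∞]`. -/
theorem hardy_littlewood_attained {Ω : Type*} [MeasurableSpace Ω]
    (P : Measure Ω) [IsProbabilityMeasure P]
    (η : Ω → ℝ) (hη : Measurable η) (hη0 : ∀ ω, 0 ≤ η ω)
    (hatomless : Continuous fun x => ((P.map η) (Iic x)).toReal)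
    (μ : Measure ℝ) [IsProbabilityMeasure μ] (hμ : μ (Iio 0) = 0) :
    P.map (fun ω => quantile μ (1 - ((P.map η) (Iic (η ω))).toReal)) = μ ∧
    ∫⁻ ω, ENNReal.ofReal (η ω * quantile μ (1 - ((P.map η) (Iic (η ω))).toReal)) ∂P
      = ∫⁻ p in Ioo (0:ℝ) 1,
          ENNReal.ofReal (quantile (P.map η) (1 - p) * quantile μ p) := by
  have : IsProbabilityMeasure (P.map η) := Measure.isProbabilityMeasure_map hη.aemeasurable
  have hF := mp_one_sub_aux.comp (map_cdf_aux (P.map η) hatomless)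
  have hη' : MeasurePreserving η P (P.map η) := ⟨hη, rfl⟩
  have hU := hF.comp hη'
  have hqμ := aemeasurable_quantile_aux μ
  constructor
  · have h := AEMeasurable.map_map_of_aemeasurable (hU.map_eq.symm ▸ hqμ) hU.aemeasurable
    rw [hU.map_eq, map_quantile_aux] at h
    exact h.symm
  · set ν := P.map η with hν
    have hq : AEMeasurable (fun x => quantile μ (1 - (ν (Iic x)).toReal)) ν :=
      hqμ.comp_quasiMeasurePreserving hF.quasiMeasurePreserving
    have hg : AEMeasurable
        (fun x => ENNReal.ofReal (x * quantile μ (1 - (ν (Iic x)).toReal))) ν :=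
      (aemeasurable_id.mul hq).ennreal_ofReal
    have hqν := aemeasurable_quantile_aux ν
    have e1 := lintegral_map' (μ := P) (g := η) hg hη.aemeasurable
    have e2 := lintegral_map' (μ := volume.restrict (Ioo (0:ℝ) 1)) (g := quantile ν)
      (f := fun x => ENNReal.ofReal (x * quantile μ (1 - (ν (Iic x)).toReal)))
      (by rw [map_quantile_aux]; exact hg) hqν
    rw [map_quantile_aux] at e2
    rw [← e1, ← hν, e2]
    have e3 : ∫⁻ p in Ioo (0:ℝ) 1, ENNReal.ofReal
          (quantile ν p * quantile μ (1 - (ν (Iic (quantile ν p))).toReal))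
        = ∫⁻ p in Ioo (0:ℝ) 1, ENNReal.ofReal (quantile ν p * quantile μ (1 - p)) := by
      refine setLIntegral_congr_fun measurableSet_Ioo fun p hp => ?_
      simp only [cdf_quantile_aux ν hatomless hp]
    rw [e3]
    have hk : AEMeasurable (fun p => ENNReal.ofReal (quantile ν p * quantile μ (1 - p)))
        (volume.restrict (Ioo (0:ℝ) 1)) :=
      (hqν.mul (hqμ.comp_quasiMeasurePreserving mp_one_sub_aux.quasiMeasurePreserving)).ennreal_ofReal
    have e4 := lintegral_map' (μ := volume.restrict (Ioo (0:ℝ) 1)) (g := fun p : ℝ => 1 - p)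
      (f := fun p => ENNReal.ofReal (quantile ν p * quantile μ (1 - p)))
      (by rw [mp_one_sub_aux.map_eq]; exact hk) mp_one_sub_aux.aemeasurable
    rw [mp_one_sub_aux.map_eq] at e4
    rw [e4]
    simp only [sub_sub_cancel]
end

section
/- Let X be a real random variable on a probability space (Ω, 𝓕, P) whose cumulative distribution function F is continuous. Then the law of the random variable F(X) is the uniform distribution on [0, 1], i.e., the pushforward of P under ω ↦ F(X(ω)) is Lebesgue measure restricted to [0, 1]. -/
open MeasureTheory Set

/-- If the cdf `F` of a real random variable `X` is continuous, then `F(X)` is uniformly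
distributed: the pushforward of `P` under `ω ↦ F(X(ω))` is Lebesgue measure on `[0, 1]`. -/
theorem cdf_of_atomless_uniform {Ω : Type*} [MeasurableSpace Ω]
    (P : Measure Ω) [IsProbabilityMeasure P]
    (X : Ω → ℝ) (hX : Measurable X)
    (F : ℝ → ℝ) (hF : F = fun x => ((P.map X) (Iic x)).toReal)
    (hcont : Continuous F) :
    P.map (fun ω => F (X ω)) = (volume : Measure ℝ).restrict (Icc (0:ℝ) 1) := by
  have hmap : P.map (fun ω => F (X ω)) = (P.map X).map F :=
    (Measure.map_map hcont.measurable hX).symm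
  rw [hmap]
  haveI : IsProbabilityMeasure (P.map X) := Measure.isProbabilityMeasure_map hX.aemeasurable
  generalize P.map X = μ at *
  have hFc : F = ProbabilityTheory.cdf μ := by
    rw [hF]; funext x; exact (ProbabilityTheory.cdf_eq_real μ x).symm
  have h0 : ∀ x, 0 ≤ F x := fun x => hFc ▸ ProbabilityTheory.cdf_nonneg μ x
  have h1 : ∀ x, F x ≤ 1 := fun x => hFc ▸ ProbabilityTheory.cdf_le_one μ x
  have hm : Monotone F := hFc ▸ ProbabilityTheory.monotone_cdf μ
  have hbot : Filter.Tendsto F Filter.atBot (nhds 0) :=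
    hFc ▸ ProbabilityTheory.tendsto_cdf_atBot μ
  have htop : Filter.Tendsto F Filter.atTop (nhds 1) :=
    hFc ▸ ProbabilityTheory.tendsto_cdf_atTop μ
  have hof : ∀ x, μ (Iic x) = ENNReal.ofReal (F x) := fun x => by
    rw [hFc, ProbabilityTheory.ofReal_cdf]
  haveI : IsProbabilityMeasure (μ.map F) :=
    Measure.isProbabilityMeasure_map hcont.measurable.aemeasurable
  refine Measure.ext_of_Iic _ _ fun t => ?_
  rw [Measure.map_apply hcont.measurable measurableSet_Iic,
    Measure.restrict_apply measurableSet_Iic]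
  rcases lt_or_ge t 0 with ht | ht
  · have e1 : F ⁻¹' Iic t = ∅ := by
      ext x; simp only [mem_preimage, mem_Iic, mem_empty_iff_false, iff_false, not_le]
      exact ht.trans_le (h0 x)
    have e2 : Iic t ∩ Icc (0:ℝ) 1 = ∅ := by
      ext x; simp only [mem_inter_iff, mem_Iic, mem_Icc, mem_empty_iff_false, iff_false]
      rintro ⟨a, b, c⟩; linarith
    rw [e1, e2]; simp
  rcases le_or_gt 1 t with ht1 | ht1
  · have e1 : F ⁻¹' Iic t = univ := by
      ext x; simp only [mem_preimage, mem_Iic, mem_univ, iff_true]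
      exact (h1 x).trans ht1
    have e2 : Iic t ∩ Icc (0:ℝ) 1 = Icc 0 1 :=
      inter_eq_right.2 fun x hx => hx.2.trans ht1
    rw [e1, e2]; simp
  have e2 : Iic t ∩ Icc (0:ℝ) 1 = Icc 0 t := by
    ext x; simp only [mem_inter_iff, mem_Iic, mem_Icc]
    constructor
    · rintro ⟨a, b, c⟩; exact ⟨b, a⟩
    · rintro ⟨a, b⟩; exact ⟨b, a, by linarith⟩
  rw [e2, Real.volume_Icc, sub_zero]
  rcases (F ⁻¹' Iic t).eq_empty_or_nonempty with he | hne
  · have : t ≤ 0 := ge_of_tendsto' hbot fun x => by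
      by_contra h
      have : x ∈ F ⁻¹' Iic t := (not_le.1 h).le
      rw [he] at this; exact this
    rw [he, ENNReal.ofReal_of_nonpos this]; simp
  · obtain ⟨b, hb⟩ := (htop.eventually (lt_mem_nhds ht1)).exists
    have hbdd : BddAbove (F ⁻¹' Iic t) := ⟨b, fun x hx => by
      by_contra h
      have h2 := hm (not_le.1 h).le
      have h3 : F x ≤ t := hx
      linarith⟩
    have hcl : IsClosed (F ⁻¹' Iic t) := isClosed_Iic.preimage hcont
    have ha := hcl.csSup_mem hne hbdd
    have hle := fun x hx => le_csSup (a := x) hbdd hx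
    generalize sSup (F ⁻¹' Iic t) = a at ha hle
    have ha' : F a ≤ t := ha
    have hS : F ⁻¹' Iic t = Iic a := by
      ext x
      exact ⟨fun hx => hle x hx, fun hx => (hm hx).trans ha'⟩
    have hge : t ≤ F a := by
      have : Filter.Tendsto F (nhdsWithin a (Ioi a)) (nhds (F a)) :=
        hcont.continuousAt.mono_left nhdsWithin_le_nhds
      refine ge_of_tendsto this ?_
      filter_upwards [self_mem_nhdsWithin] with x hx
      by_contra h
      exact absurd (hle x (not_le.1 h).le) (not_le.2 hx)
    rw [hS, hof, le_antisymm ha' hge]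
end

section
/- Let μ be a Borel probability measure on ℝ with cumulative distribution function F(x) = μ((−∞, x]) and quantile function q_μ. Let w : [0, 1] → [0, 1] be nondecreasing and continuously differentiable with w(0) = 0 and w(1) = 1. Define G(x) := 1 − w(1 − F(x)); then G is a nondecreasing right-continuous function with limit 0 at −∞ and 1 at +∞, and for its associated Lebesgue–Stieltjes (Borel probability) measure ν and every Borel measurable u : ℝ → [0, ∞], ∫_ℝ u dν = ∫₀¹ u(q_μ(p)) · w′(1 − p) dp. -/
open MeasureTheory Set

open Filter Topology ProbabilityTheory

lemma quantile_le_iff' (μ : Measure ℝ) [IsProbabilityMeasure μ] {p : ℝ} (hp : p ∈ Ioo (0:ℝ) 1)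
    (x : ℝ) : quantile μ p ≤ x ↔ p ≤ cdf μ x := by
  have hS : {x : ℝ | p ≤ (μ (Iic x)).toReal} = {x : ℝ | p ≤ cdf μ x} := by
    ext y; simp only [mem_ofPred_eq, cdf_eq_real]; rfl
  unfold quantile
  rw [hS]
  have hbdd : BddBelow {x : ℝ | p ≤ cdf μ x} := by
    have h := (tendsto_cdf_atBot μ).eventually (gt_mem_nhds hp.1)
    obtain ⟨y, hy⟩ := h.exists
    refine ⟨y, fun z hz => ?_⟩
    by_contra hlt
    push Not at hlt
    have := monotone_cdf μ hlt.le
    simp only [mem_ofPred_eq] at hz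
    linarith
  have hne : {x : ℝ | p ≤ cdf μ x}.Nonempty := by
    have h := (tendsto_cdf_atTop μ).eventually (lt_mem_nhds hp.2)
    obtain ⟨y, hy⟩ := h.exists
    exact ⟨y, le_of_lt hy⟩
  constructor
  · intro h
    have hr : ∀ y, x < y → p ≤ cdf μ y := by
      intro y hy
      obtain ⟨z, hz, hzy⟩ := exists_lt_of_csInf_lt hne (lt_of_le_of_lt h hy)
      exact le_trans hz (monotone_cdf μ hzy.le)
    have hc : Tendsto (cdf μ) (𝓝[>] x) (𝓝 (cdf μ x)) :=
      ((cdf μ).right_continuous x).mono Ioi_subset_Ici_self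
    exact ge_of_tendsto hc (eventually_nhdsWithin_of_forall hr)
  · intro h
    exact csInf_le hbdd h

lemma quantile_monoOn (μ : Measure ℝ) [IsProbabilityMeasure μ] :
    MonotoneOn (quantile μ) (Ioo (0:ℝ) 1) := by
  intro p hp q hq hpq
  rw [quantile_le_iff' μ hp]
  exact hpq.trans ((quantile_le_iff' μ hq _).1 le_rfl)

lemma density_Ioc (w w' : ℝ → ℝ)
    (hw_mono : MonotoneOn w (Icc (0:ℝ) 1))
    (hw_deriv : ∀ x ∈ Icc (0:ℝ) 1, HasDerivWithinAt w (w' x) (Icc (0:ℝ) 1) x)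
    (hw'_cont : ContinuousOn w' (Icc (0:ℝ) 1)) {a b : ℝ} (ha : 0 ≤ a) (hab : a ≤ b)
    (hb : b ≤ 1) :
    ∫⁻ p in Ioc a b, ENNReal.ofReal (w' (1 - p)) = ENNReal.ofReal (w (1 - a) - w (1 - b)) := by
  have hsub : ∀ p ∈ Icc a b, 1 - p ∈ Icc (0:ℝ) 1 := fun p hp =>
    ⟨by linarith [hp.2], by linarith [hp.1]⟩
  have hc : ContinuousOn (fun p => w' (1 - p)) (Icc a b) :=
    hw'_cont.comp (by fun_prop) hsub
  have hwc : ContinuousOn w (Icc 0 1) := fun x hx => (hw_deriv x hx).continuousWithinAt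
  have hnn : ∀ x ∈ Icc (0:ℝ) 1, 0 ≤ w' x := by
    intro x hx
    rw [← (hw_deriv x hx).derivWithin (uniqueDiffOn_Icc zero_lt_one x hx)]
    exact hw_mono.derivWithin_nonneg
  have hint : IntegrableOn (fun p => w' (1 - p)) (Icc a b) := hc.integrableOn_Icc
  have hftc : ∫ p in a..b, w' (1 - p) = -w (1 - b) - -w (1 - a) := by
    apply intervalIntegral.integral_eq_sub_of_hasDerivAt_of_le (f := fun p => -w (1 - p)) hab
    · exact (hwc.comp (by fun_prop) hsub).neg
    · intro p hp
      have h1 : HasDerivAt w (w' (1 - p)) (1 - p) :=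
        (hw_deriv _ (hsub p ⟨hp.1.le, hp.2.le⟩)).hasDerivAt
          (Icc_mem_nhds (by linarith [hp.2]) (by linarith [hp.1]))
      have h2 : HasDerivAt (fun p : ℝ => 1 - p) (-1) p := by
        simpa using (hasDerivAt_id p).const_sub 1
      simpa using (h1.comp p h2).fun_neg
    · rw [intervalIntegrable_iff_integrableOn_Icc_of_le hab]
      exact hint
  rw [← ofReal_integral_eq_lintegral_ofReal (hint.mono_set Ioc_subset_Icc_self),
    ← intervalIntegral.integral_of_le hab, hftc]
  · congr 1; ring
  · exact (ae_restrict_iff' measurableSet_Ioc).2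
      (Eventually.of_forall fun p hp => hnn _ (hsub p ⟨hp.1.le, hp.2⟩))

/-- Distorted-expectation (rank-dependent utility) identity: with `F` the cdf of `μ`,
`w : [0,1] → [0,1]` a nondecreasing C¹ distortion with `w(0)=0`, `w(1)=1`, the function
`G(x) = 1 - w(1 - F(x))` is a nondecreasing right-continuous cdf (limits `0` at `-∞`, `1` at
`+∞`), and its Lebesgue–Stieltjes measure `ν` satisfies
`∫ u dν = ∫₀¹ u(q_μ(p)) w'(1-p) dp` for every Borel `u : ℝ → [0, ∞]`. -/
theorem distorted_measure_quantile
    (μ : Measure ℝ) [IsProbabilityMeasure μ]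
    (F : ℝ → ℝ) (hF : F = fun x => (μ (Iic x)).toReal)
    (w w' : ℝ → ℝ)
    (hw_mono : MonotoneOn w (Icc (0:ℝ) 1))
    (hw_maps : ∀ x ∈ Icc (0:ℝ) 1, w x ∈ Icc (0:ℝ) 1)
    (hw0 : w 0 = 0) (hw1 : w 1 = 1)
    (hw_deriv : ∀ x ∈ Icc (0:ℝ) 1, HasDerivWithinAt w (w' x) (Icc (0:ℝ) 1) x)
    (hw'_cont : ContinuousOn w' (Icc (0:ℝ) 1))
    (G : ℝ → ℝ) (hG : G = fun x => 1 - w (1 - F x)) :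
    Monotone G ∧
    (∀ x, ContinuousWithinAt G (Ici x) x) ∧
    Filter.Tendsto G Filter.atBot (nhds 0) ∧
    Filter.Tendsto G Filter.atTop (nhds 1) ∧
    (∀ ν : Measure ℝ,
      (∀ a b : ℝ, a ≤ b → ν (Ioc a b) = ENNReal.ofReal (G b - G a)) →
      IsProbabilityMeasure ν ∧
      ∀ u : ℝ → ENNReal, Measurable u →
        ∫⁻ x, u x ∂ν
          = ∫⁻ p in Ioo (0:ℝ) 1, u (quantile μ p) * ENNReal.ofReal (w' (1 - p))) := by
  have hFc : F = cdf μ := by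
    rw [hF]; ext y; rw [cdf_eq_real]; rfl
  clear hF
  subst hFc
  have hF01 : ∀ x, cdf μ x ∈ Icc (0:ℝ) 1 := fun x => ⟨cdf_nonneg μ x, cdf_le_one μ x⟩
  have hF01' : ∀ x, 1 - cdf μ x ∈ Icc (0:ℝ) 1 := fun x =>
    ⟨by linarith [(hF01 x).2], by linarith [(hF01 x).1]⟩
  have hwc : ContinuousOn w (Icc 0 1) := fun x hx => (hw_deriv x hx).continuousWithinAt
  have hlim : ∀ (l : Filter ℝ) (c : ℝ), c ∈ Icc (0:ℝ) 1 → Tendsto (cdf μ) l (𝓝 c) →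
      Tendsto G l (𝓝 (1 - w (1 - c))) := by
    intro l c hc h
    rw [hG]
    refine Tendsto.const_sub 1 ?_
    have hcw := hwc (1 - c) ⟨by linarith [hc.2], by linarith [hc.1]⟩
    refine hcw.tendsto.comp (tendsto_nhdsWithin_iff.2 ⟨h.const_sub 1, ?_⟩)
    exact Eventually.of_forall hF01'
  refine ⟨?_, ?_, ?_, ?_, ?_⟩
  · intro x y hxy
    rw [hG]
    have := hw_mono (hF01' y) (hF01' x) (by linarith [monotone_cdf μ hxy])
    simp only
    linarith
  · intro x
    have := hlim _ _ (hF01 x) ((cdf μ).right_continuous x)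
    rw [ContinuousWithinAt]
    convert this using 2
    rw [hG]
  · simpa [hw1] using hlim _ 0 (by simp) (tendsto_cdf_atBot μ)
  · simpa [hw0] using hlim _ 1 (by simp) (tendsto_cdf_atTop μ)
  intro ν hν
  have hd : AEMeasurable (fun p => ENNReal.ofReal (w' (1 - p)))
      (volume.restrict (Ioo (0:ℝ) 1)) := by
    apply AEMeasurable.ennreal_ofReal
    refine ContinuousOn.aemeasurable ?_ measurableSet_Ioo
    refine hw'_cont.comp (by fun_prop) ?_
    intro p hp
    exact ⟨by linarith [hp.2], by linarith [hp.1]⟩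
  have hq : AEMeasurable (quantile μ) (volume.restrict (Ioo (0:ℝ) 1)) :=
    aemeasurable_restrict_of_monotoneOn measurableSet_Ioo (quantile_monoOn μ)
  set ρ := (volume.restrict (Ioo (0:ℝ) 1)).withDensity
    (fun p => ENNReal.ofReal (w' (1 - p))) with hρ
  have hqρ : AEMeasurable (quantile μ) ρ :=
    hq.mono_ac (withDensity_absolutelyContinuous _ _)
  have hdens : ∀ {a b : ℝ}, 0 ≤ a → a ≤ b → b ≤ 1 →
      ∫⁻ p in Ioc a b, ENNReal.ofReal (w' (1 - p)) = ENNReal.ofReal (w (1 - a) - w (1 - b)) :=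
    fun ha hab hb => density_Ioc w w' hw_mono hw_deriv hw'_cont ha hab hb
  have hρu : ρ univ = 1 := by
    rw [hρ, withDensity_apply _ MeasurableSet.univ, Measure.restrict_univ,
      Measure.restrict_congr_set Ioo_ae_eq_Ioc, hdens le_rfl zero_le_one le_rfl]
    simp [hw0, hw1]
  have hρp : IsProbabilityMeasure ρ := ⟨hρu⟩
  have hmp : IsProbabilityMeasure (ρ.map (quantile μ)) := Measure.isProbabilityMeasure_map hqρ
  have hkey : ρ.map (quantile μ) = ν := by
    refine Measure.ext_of_Ioc _ _ ?_
    intro a b hab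
    rw [hν a b hab.le, Measure.map_apply_of_aemeasurable hqρ measurableSet_Ioc]
    have hae : (quantile μ ⁻¹' Ioc a b : Set ℝ) =ᵐ[ρ] Ioc (cdf μ a) (cdf μ b) := by
      refine (withDensity_absolutelyContinuous _ _).ae_le ?_
      refine (ae_restrict_iff' measurableSet_Ioo).2 (Eventually.of_forall fun p hp => ?_)
      refine propext ?_
      change (a < quantile μ p ∧ quantile μ p ≤ b) ↔ (cdf μ a < p ∧ p ≤ cdf μ b)
      rw [quantile_le_iff' μ hp, ← not_le, quantile_le_iff' μ hp, not_le]
    rw [measure_congr hae, hρ, withDensity_apply _ measurableSet_Ioc,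
      Measure.restrict_congr_set Ioo_ae_eq_Ioc, Measure.restrict_restrict measurableSet_Ioc,
      inter_eq_left.2 (Ioc_subset_Ioc (hF01 a).1 (hF01 b).2),
      hdens (hF01 a).1 (monotone_cdf μ hab.le) (hF01 b).2, hG]
    congr 1
    ring
  rw [← hkey]
  refine ⟨hmp, fun u hu => ?_⟩
  rw [lintegral_map' hu.aemeasurable hqρ, hρ]
  refine
    (lintegral_withDensity_eq_lintegral_mul₀ hd (hu.comp_aemeasurable hq)).trans ?_
  refine lintegral_congr fun p => ?_
  simp [mul_comm]
end

section
/- Let T > 0. Let f : [0, T] × ℝ → ℝ have continuous partial derivatives f_t and f_y, and let h : [0, T] × ℝ → ℝ be continuous with continuous partial derivatives h_y and h_yy. Suppose the compatibility condition 2 f_y(t, y) h(t, y) + 2 f(t, y) h_y(t, y) − h_yy(t, y) = −2 f_t(t, y) holds for all (t, y) ∈ [0, T] × ℝ. Define A(t) := ∫₀ᵗ [2 f(s, 0) h(s, 0) − h_y(s, 0)] ds and φ(t, y) := e^{A(t)} ∫₀ʸ e^{−2 ∫₀ᶻ f(t, x) dx} dz − ∫₀ᵗ e^{A(u)} h(u,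 0) du. Then φ satisfies the transport equation ∂φ/∂t (t, y) + (∂φ/∂y (t, y)) · h(t, y) = 0 for all (t, y) ∈ [0, T] × ℝ. -/
open Set intervalIntegral

/-- `A(t) = ∫₀ᵗ [2 f(s,0) h(s,0) - h_y(s,0)] ds`. -/
noncomputable def Afun (f h hy : ℝ → ℝ → ℝ) (t : ℝ) : ℝ :=
  ∫ s in (0:ℝ)..t, (2 * f s 0 * h s 0 - hy s 0)

/-- `φ(t,y) = e^{A(t)} ∫₀ʸ e^{-2∫₀ᶻ f(t,x) dx} dz - ∫₀ᵗ e^{A(u)} h(u,0) du`. -/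
noncomputable def phiFun (f h hy : ℝ → ℝ → ℝ) (t y : ℝ) : ℝ :=
  Real.exp (Afun f h hy t) * (∫ z in (0:ℝ)..y, Real.exp (-2 * ∫ x in (0:ℝ)..z, f t x))
    - ∫ u in (0:ℝ)..t, Real.exp (Afun f h hy u) * h u 0

theorem clamp_cont (T : ℝ) : Continuous fun s : ℝ => max 0 (min T s) := by fun_prop

theorem clamp_mem {T : ℝ} (hT : 0 < T) (s : ℝ) : max 0 (min T s) ∈ Icc (0:ℝ) T :=
  ⟨le_max_left _ _, max_le hT.le (min_le_left _ _)⟩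

theorem clamp_eq {T s : ℝ} (hs : s ∈ Icc (0:ℝ) T) : max 0 (min T s) = s := by
  rw [min_eq_right hs.2, max_eq_right hs.1]

theorem ftc_within {T : ℝ} (hT : 0 < T) (g : ℝ → ℝ) (hg : ContinuousOn g (Icc (0:ℝ) T))
    {t : ℝ} (ht : t ∈ Icc (0:ℝ) T) :
    HasDerivWithinAt (fun t => ∫ s in (0:ℝ)..t, g s) (g t) (Icc (0:ℝ) T) t := by
  have hc : Continuous fun s => g (max 0 (min T s)) :=
    hg.comp_continuous (clamp_cont T) (clamp_mem hT)
  have h1 := (hc.integral_hasStrictDerivAt 0 t).hasDerivAt.hasDerivWithinAt (s := Icc (0:ℝ) T)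
  simp only [clamp_eq ht] at h1
  have key : ∀ u ∈ Icc (0:ℝ) T,
      (∫ s in (0:ℝ)..u, g s) = ∫ s in (0:ℝ)..u, g (max 0 (min T s)) := by
    intro u hu
    apply integral_congr
    intro s hs
    rw [uIcc_of_le hu.1] at hs
    simp only [clamp_eq (⟨hs.1, hs.2.trans hu.2⟩ : s ∈ Icc (0:ℝ) T)]
  exact h1.congr key (key t ht)

theorem leibniz_within {T : ℝ} (hT : 0 < T) (F F' : ℝ → ℝ → ℝ)
    (hF : ∀ t ∈ Icc (0:ℝ) T, Continuous (F t))
    (hd : ∀ t ∈ Icc (0:ℝ) T, ∀ y : ℝ,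
      HasDerivWithinAt (fun s => F s y) (F' t y) (Icc (0:ℝ) T) t)
    (hc : ContinuousOn (fun p : ℝ × ℝ => F' p.1 p.2) (Icc (0:ℝ) T ×ˢ univ))
    {t : ℝ} (ht : t ∈ Icc (0:ℝ) T) (y : ℝ) :
    HasDerivWithinAt (fun s => ∫ x in (0:ℝ)..y, F s x) (∫ x in (0:ℝ)..y, F' t x)
      (Icc (0:ℝ) T) t := by
  have hc' : Continuous fun p : ℝ × ℝ => F' (max 0 (min T p.1)) p.2 :=
    hc.comp_continuous (f := fun p : ℝ × ℝ => (max 0 (min T p.1), p.2)) (by fun_prop)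
      (fun p => ⟨clamp_mem hT p.1, mem_univ _⟩)
  have hJ : Continuous fun s => ∫ x in (0:ℝ)..y, F' (max 0 (min T s)) x :=
    continuous_parametric_intervalIntegral_of_continuous' (f := fun s x => F' (max 0 (min T s)) x)
      hc' 0 y
  have h1 := ((hJ.integral_hasStrictDerivAt 0 t).hasDerivAt.const_add
    (∫ x in (0:ℝ)..y, F 0 x)).hasDerivWithinAt (s := Icc (0:ℝ) T)
  simp only [clamp_eq ht] at h1
  have h0 : (0:ℝ) ∈ Icc (0:ℝ) T := ⟨le_rfl, hT.le⟩
  have key : ∀ u ∈ Icc (0:ℝ) T, (∫ x in (0:ℝ)..y, F u x) = (∫ x in (0:ℝ)..y, F 0 x) +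
      ∫ s in (0:ℝ)..u, ∫ x in (0:ℝ)..y, F' (max 0 (min T s)) x := by
    intro u hu
    have hsw : (∫ s in (0:ℝ)..u, ∫ x in (0:ℝ)..y, F' (max 0 (min T s)) x)
        = ∫ x in (0:ℝ)..y, ∫ s in (0:ℝ)..u, F' (max 0 (min T s)) x := by
      apply MeasureTheory.intervalIntegral_intervalIntegral_swap
      have hi : MeasureTheory.IntegrableOn (fun p : ℝ × ℝ => F' (max 0 (min T p.1)) p.2)
          (uIcc 0 u ×ˢ uIcc 0 y) MeasureTheory.volume :=
        hc'.continuousOn.integrableOn_compact (isCompact_uIcc.prod isCompact_uIcc)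
      exact hi.mono_set (prod_mono uIoc_subset_uIcc uIoc_subset_uIcc)
    have hin : ∀ x, (∫ s in (0:ℝ)..u, F' (max 0 (min T s)) x) = F u x - F 0 x := by
      intro x
      apply integral_eq_sub_of_hasDerivAt_of_le (f := fun s => F s x) hu.1
      · intro s hs
        exact ((hd s ⟨hs.1, hs.2.trans hu.2⟩ x).continuousWithinAt).mono
          (Icc_subset_Icc le_rfl hu.2)
      · intro s hs
        have hs' : s ∈ Icc (0:ℝ) T := ⟨hs.1.le, hs.2.le.trans hu.2⟩
        rw [clamp_eq hs']
        exact (hd s hs' x).hasDerivAt (Icc_mem_nhds hs.1 (hs.2.trans_le hu.2))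
      · apply Continuous.intervalIntegrable
        exact hc'.comp (by fun_prop : Continuous fun s : ℝ => (s, x))
    rw [hsw]
    simp only [hin]
    rw [integral_sub ((hF u hu).intervalIntegrable _ _) ((hF 0 h0).intervalIntegrable _ _)]
    ring
  exact h1.congr key (key t ht)

/-- Under the compatibility condition `2 f_y h + 2 f h_y - h_yy = -2 f_t`, the function `φ`
satisfies the transport equation `φ_t + φ_y h = 0` on `[0,T] × ℝ`, where
`φ_y(t,y) = e^{A(t)} e^{-2∫₀ʸ f(t,x) dx}`. -/
theorem phi_transport_equation
    (T : ℝ) (hT : 0 < T)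
    (f ft fy h hy hyy : ℝ → ℝ → ℝ)
    (hf_cont : Continuous fun p : ℝ × ℝ => f p.1 p.2)
    (hf_t : ∀ t ∈ Icc (0:ℝ) T, ∀ y : ℝ,
      HasDerivWithinAt (fun s => f s y) (ft t y) (Icc (0:ℝ) T) t)
    (hf_y : ∀ t ∈ Icc (0:ℝ) T, ∀ y : ℝ, HasDerivAt (fun x => f t x) (fy t y) y)
    (hft_cont : ContinuousOn (fun p : ℝ × ℝ => ft p.1 p.2) (Icc (0:ℝ) T ×ˢ univ))
    (hfy_cont : ContinuousOn (fun p : ℝ × ℝ => fy p.1 p.2) (Icc (0:ℝ) T ×ˢ univ))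
    (hh_cont : Continuous fun p : ℝ × ℝ => h p.1 p.2)
    (hh_y : ∀ t ∈ Icc (0:ℝ) T, ∀ y : ℝ, HasDerivAt (fun x => h t x) (hy t y) y)
    (hh_yy : ∀ t ∈ Icc (0:ℝ) T, ∀ y : ℝ, HasDerivAt (fun x => hy t x) (hyy t y) y)
    (hhy_cont : ContinuousOn (fun p : ℝ × ℝ => hy p.1 p.2) (Icc (0:ℝ) T ×ˢ univ))
    (hhyy_cont : ContinuousOn (fun p : ℝ × ℝ => hyy p.1 p.2) (Icc (0:ℝ) T ×ˢ univ))
    (hcompat : ∀ t ∈ Icc (0:ℝ) T, ∀ y : ℝ,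
      2 * fy t y * h t y + 2 * f t y * hy t y - hyy t y = -2 * ft t y) :
    ∀ t ∈ Icc (0:ℝ) T, ∀ y : ℝ,
      HasDerivWithinAt (fun s => phiFun f h hy s y)
        (-(Real.exp (Afun f h hy t) * Real.exp (-2 * ∫ x in (0:ℝ)..y, f t x)) * h t y)
        (Icc (0:ℝ) T) t := by
  intro t ht y
  have slice : ∀ (g : ℝ → ℝ → ℝ), ContinuousOn (fun p : ℝ × ℝ => g p.1 p.2) (Icc (0:ℝ) T ×ˢ univ) →
      ∀ s ∈ Icc (0:ℝ) T, Continuous (g s) := by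
    intro g hg s hs
    exact hg.comp_continuous (f := fun x : ℝ => (s, x)) (by fun_prop) (fun x => ⟨hs, mem_univ _⟩)
  have fslice : ∀ s, Continuous (f s) := fun s =>
    hf_cont.comp (by fun_prop : Continuous fun x : ℝ => (s, x))
  have hGc : ContinuousOn (fun p : ℝ × ℝ => 2 * f p.1 p.2 * h p.1 p.2 - hy p.1 p.2)
      (Icc (0:ℝ) T ×ˢ univ) :=
    (((continuous_const.mul hf_cont).mul hh_cont).continuousOn).sub hhy_cont
  have hG0 : ContinuousOn (fun s => 2 * f s 0 * h s 0 - hy s 0) (Icc (0:ℝ) T) :=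
    hGc.comp (f := fun s : ℝ => (s, (0:ℝ))) (by fun_prop) (fun x hx => ⟨hx, mem_univ _⟩)
  have hA : ∀ s ∈ Icc (0:ℝ) T, HasDerivWithinAt (Afun f h hy) (2 * f s 0 * h s 0 - hy s 0)
      (Icc (0:ℝ) T) s := fun s hs => ftc_within hT _ hG0 hs
  have hAc : ContinuousOn (Afun f h hy) (Icc (0:ℝ) T) := fun s hs => (hA s hs).continuousWithinAt
  have hI : Continuous fun p : ℝ × ℝ => ∫ x in (0:ℝ)..p.2, f p.1 x :=
    continuous_parametric_primitive_of_continuous (f := fun s x => f s x) hf_cont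
  -- spatial primitive
  have hG : ∀ s ∈ Icc (0:ℝ) T, ∀ z, 2 * f s z * h s z - hy s z
      = 2 * f s 0 * h s 0 - hy s 0 + -2 * ∫ x in (0:ℝ)..z, ft s x := by
    intro s hs z
    have := integral_eq_sub_of_hasDerivAt (a := 0) (b := z)
      (f := fun x => 2 * f s x * h s x - hy s x) (f' := fun x => -2 * ft s x)
      (fun x _ => by
        have := (((hf_y s hs x).const_mul 2).mul (hh_y s hs x)).sub (hh_yy s hs x)
        exact this.congr_deriv (hcompat s hs x))
      ((continuous_const.mul (slice ft hft_cont s hs)).intervalIntegrable _ _)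
    rw [intervalIntegral.integral_const_mul] at this
    linarith
  let E : ℝ → ℝ → ℝ := fun s z => Real.exp (Afun f h hy s) * Real.exp (-2 * ∫ x in (0:ℝ)..z, f s x)
  have hEt : ∀ s ∈ Icc (0:ℝ) T, ∀ z, HasDerivWithinAt (fun s => E s z)
      (E s z * (2 * f s z * h s z - hy s z)) (Icc (0:ℝ) T) s := by
    intro s hs z
    have h2 := leibniz_within hT f ft (fun s _ => fslice s) hf_t hft_cont hs z
    have h3 := (hA s hs).exp.mul (h2.const_mul (-2)).exp
    refine HasDerivWithinAt.congr_deriv (f := fun s => E s z) h3 ?_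
    rw [hG s hs z]
    simp only [E]
    ring
  have hEc : ContinuousOn (fun p : ℝ × ℝ => E p.1 p.2) (Icc (0:ℝ) T ×ˢ univ) := by
    apply ContinuousOn.mul
    · exact Real.continuous_exp.comp_continuousOn
        (hAc.comp continuous_fst.continuousOn (fun p hp => hp.1))
    · exact (Real.continuous_exp.comp (continuous_const.mul hI)).continuousOn
  have h4 := leibniz_within hT E (fun s z => E s z * (2 * f s z * h s z - hy s z))
    (slice E hEc) hEt (hEc.mul hGc) ht y
  have h5 : (∫ z in (0:ℝ)..y, E t z * (2 * f t z * h t z - hy t z))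
      = -(E t y * h t y) - -(E t 0 * h t 0) := by
    apply integral_eq_sub_of_hasDerivAt (f := fun z => -(E t z * h t z))
    · intro z _
      have hp := ((fslice t).integral_hasStrictDerivAt 0 z).hasDerivAt
      have := ((((hp.const_mul (-2)).exp.const_mul (Real.exp (Afun f h hy t))).mul
        (hh_y t ht z))).neg
      refine HasDerivAt.congr_deriv (f := fun z => -(E t z * h t z)) this ?_
      simp only [E]
      ring
    · exact (slice (fun s z => E s z * (2 * f s z * h s z - hy s z))
        (hEc.mul hGc) t ht).intervalIntegrable _ _
  have h6 : HasDerivWithinAt (fun t => ∫ u in (0:ℝ)..t, Real.exp (Afun f h hy u) * h u 0)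
      (Real.exp (Afun f h hy t) * h t 0) (Icc (0:ℝ) T) t := by
    apply ftc_within hT (fun u => Real.exp (Afun f h hy u) * h u 0) _ ht
    exact (Real.continuous_exp.comp_continuousOn hAc).mul
      (hh_cont.comp (by fun_prop : Continuous fun s : ℝ => (s, (0:ℝ)))).continuousOn
  have h7 := h4.sub h6
  rw [h5] at h7
  have he : E t 0 = Real.exp (Afun f h hy t) := by simp [E]
  rw [he] at h7
  have hφ : (fun s => phiFun f h hy s y) = (fun s => ∫ x in (0:ℝ)..y, E s x) -
      fun t => ∫ u in (0:ℝ)..t, Real.exp (Afun f h hy u) * h u 0 := by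
    funext s
    simp only [phiFun, E, Pi.sub_apply, intervalIntegral.integral_const_mul]
  rw [hφ]
  refine h7.congr_deriv ?_
  simp only [E]
  ring
end

section
/- Let T > 0 and let φ : [0, T] × ℝ → ℝ, f, h : [0, T] × ℝ → ℝ be functions such that φ has continuous partial derivatives φ_t, φ_y, φ_yy and the mixed partial ∂/∂y (φ_t) exists, and h has a partial derivative h_y. If φ_t(t, y) + φ_y(t, y) h(t, y) = 0 and f(t, y) φ_y(t, y) + (1/2) φ_yy(t, y) = 0 hold for all (t, y) ∈ [0, T] × ℝ, then ∂/∂y (φ_t)(t, y) = φ_y(t, y) · (2 f(t, y) h(t, y) − h_y(t, y)) for all (t, y) ∈ [0, T] × ℝ. -/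
open Set

/-- Intermediate identity (eqlt1): if `φ_t + φ_y h = 0` and `f φ_y + ½ φ_yy = 0` on
`[0,T] × ℝ`, then `∂/∂y (φ_t) = φ_y (2 f h - h_y)`. -/
theorem mixed_partial_identity
    (T : ℝ) (hT : 0 < T)
    (φ φt φy φyy φty f h hy : ℝ → ℝ → ℝ)
    (hφt : ∀ t ∈ Icc (0:ℝ) T, ∀ y : ℝ,
      HasDerivWithinAt (fun s => φ s y) (φt t y) (Icc (0:ℝ) T) t)
    (hφy : ∀ t ∈ Icc (0:ℝ) T, ∀ y : ℝ, HasDerivAt (fun x => φ t x) (φy t y) y)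
    (hφyy : ∀ t ∈ Icc (0:ℝ) T, ∀ y : ℝ, HasDerivAt (fun x => φy t x) (φyy t y) y)
    (hφty : ∀ t ∈ Icc (0:ℝ) T, ∀ y : ℝ, HasDerivAt (fun x => φt t x) (φty t y) y)
    (hφt_cont : ContinuousOn (fun p : ℝ × ℝ => φt p.1 p.2) (Icc (0:ℝ) T ×ˢ univ))
    (hφy_cont : ContinuousOn (fun p : ℝ × ℝ => φy p.1 p.2) (Icc (0:ℝ) T ×ˢ univ))
    (hφyy_cont : ContinuousOn (fun p : ℝ × ℝ => φyy p.1 p.2) (Icc (0:ℝ) T ×ˢ univ))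
    (hh_y : ∀ t ∈ Icc (0:ℝ) T, ∀ y : ℝ, HasDerivAt (fun x => h t x) (hy t y) y)
    (heq1 : ∀ t ∈ Icc (0:ℝ) T, ∀ y : ℝ, φt t y + φy t y * h t y = 0)
    (heq2 : ∀ t ∈ Icc (0:ℝ) T, ∀ y : ℝ, f t y * φy t y + (1/2) * φyy t y = 0) :
    ∀ t ∈ Icc (0:ℝ) T, ∀ y : ℝ,
      φty t y = φy t y * (2 * f t y * h t y - hy t y) := by
  intro t ht y
  have h1 := (hφty t ht y).add ((hφyy t ht y).mul (hh_y t ht y))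
  have h2 : HasDerivAt (fun _ : ℝ => (0:ℝ)) (φty t y + (φyy t y * h t y + φy t y * hy t y)) y :=
    h1.congr_of_eventuallyEq (Filter.Eventually.of_forall fun x => (heq1 t ht x).symm)
  have h3 := h2.unique (hasDerivAt_const y (0:ℝ))
  have h4 := heq2 t ht y
  linear_combination h3 - 2 * h t y * h4
end
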